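/- arXiv:1506.05681 — 2 statements merged into one kernel-verified Lean document; each statement's English description precedes it below -/
import Mathlib

section
/- Let F be a field of characteristic zero and let k₁, k₂, k₃ be natural numbers with k₁+k₂+k₃ even and balanced (i.e. k₁ ≤ k₂+k₃, k₂ ≤ k₁+k₃, k₃ ≤ k₁+k₂). Then the F-subspace of P_{(k₁,k₂,k₃)} consisting of polynomials P satisfying P(W₁g, W₂g, W₃g) = P(W₁, W₂, W₃) for every g ∈ SL₂(F) is one-dimensional, spanned by Δ_{(k₁,k₂,k₃)}. (Equivalently, the space of SL₂(F)-equivariant linear forms on the tensor product V_{k₁} ⊗ V_{k₂} ⊗ V_{k₃} of the duals V_{k_i} of P_{k_i} is one-dimensional.) -/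
open MvPolynomial

/-- The substitution action of a `2 × 2` matrix `g` on polynomials in the three pairs of
variables `Wᵢ = (Xᵢ, Yᵢ)` (indexed by `Fin 3 × Fin 2`), given by `Wᵢ ↦ Wᵢ g`, i.e.
`(Xᵢ, Yᵢ) ↦ (a Xᵢ + c Yᵢ, b Xᵢ + d Yᵢ)` for `g = [[a,b],[c,d]]`. -/
noncomputable def matSubst (F : Type*) [Field F] (g : Matrix (Fin 2) (Fin 2) F) :
    MvPolynomial (Fin 3 × Fin 2) F →ₐ[F] MvPolynomial (Fin 3 × Fin 2) F :=
  aeval fun v : Fin 3 × Fin 2 =>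
    C (g 0 v.2) * X (v.1, (0 : Fin 2)) + C (g 1 v.2) * X (v.1, (1 : Fin 2))

/-- `δ(Wᵢ, Wⱼ) = Xᵢ Yⱼ - Yᵢ Xⱼ`. -/
noncomputable def deltaPoly (F : Type*) [Field F] (i j : Fin 3) :
    MvPolynomial (Fin 3 × Fin 2) F :=
  X (i, (0 : Fin 2)) * X (j, (1 : Fin 2)) - X (i, (1 : Fin 2)) * X (j, (0 : Fin 2))

/-- `Δ_{(k₁,k₂,k₃)} = δ(W₂,W₃)^{k₁*} δ(W₁,W₃)^{k₂*} δ(W₁,W₂)^{k₃*}` where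
`k₁* = (-k₁+k₂+k₃)/2`, `k₂* = (k₁-k₂+k₃)/2`, `k₃* = (k₁+k₂-k₃)/2`. -/
noncomputable def DeltaPoly (F : Type*) [Field F] (k₁ k₂ k₃ : ℕ) :
    MvPolynomial (Fin 3 × Fin 2) F :=
  deltaPoly F 1 2 ^ ((k₂ + k₃ - k₁) / 2) * deltaPoly F 0 2 ^ ((k₁ + k₃ - k₂) / 2) *
    deltaPoly F 0 1 ^ ((k₁ + k₂ - k₃) / 2)

/-- `P` is homogeneous of degree `k i` in the `i`-th pair of variables, for each `i`;
i.e. `P ∈ P_{(k 0, k 1, k 2)}`. -/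
def IsTriHomogeneous {F : Type*} [Field F] (P : MvPolynomial (Fin 3 × Fin 2) F)
    (k : Fin 3 → ℕ) : Prop :=
  ∀ m ∈ P.support, ∀ i : Fin 3, m (i, (0 : Fin 2)) + m (i, (1 : Fin 2)) = k i

def ptE {F : Type*} (a b c d e k : F) : Fin 3 × Fin 2 → F :=
  fun v => (![![a, b], ![c, d], ![e, k]] : Fin 3 → Fin 2 → F) v.1 v.2

lemma ptE_eta {F : Type*} (x : Fin 3 × Fin 2 → F) :
    x = ptE (x (0,0)) (x (0,1)) (x (1,0)) (x (1,1)) (x (2,0)) (x (2,1)) := by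
  funext v
  obtain ⟨i, j⟩ := v
  fin_cases i <;> fin_cases j <;> rfl

lemma eval_scale {F : Type*} [Field F] {P : MvPolynomial (Fin 3 × Fin 2) F} {k₁ k₂ k₃ : ℕ}
    (hP : IsTriHomogeneous P ![k₁, k₂, k₃]) (r s t a b c d e k : F) :
    eval (ptE (r*a) (r*b) (s*c) (s*d) (t*e) (t*k)) P
      = r^k₁ * s^k₂ * t^k₃ * eval (ptE a b c d e k) P := by
  rw [eval_eq', eval_eq', Finset.mul_sum]
  refine Finset.sum_congr rfl fun m hm => ?_
  have h0 := hP m hm 0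
  have h1 := hP m hm 1
  have h2 := hP m hm 2
  simp at h0 h1 h2
  simp only [Fintype.prod_prod_type, Fin.prod_univ_two, Fin.prod_univ_three, ptE]
  simp [mul_pow]
  rw [← h0, ← h1, ← h2]
  ring

lemma eval_inv {F : Type*} [Field F] {P : MvPolynomial (Fin 3 × Fin 2) F}
    (hP : ∀ g : Matrix (Fin 2) (Fin 2) F, g.det = 1 → matSubst F g P = P)
    (p q r s a b c d e k : F) (h : p * s - q * r = 1) :
    eval (ptE (p*a+r*b) (q*a+s*b) (p*c+r*d) (q*c+s*d) (p*e+r*k) (q*e+s*k)) P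
      = eval (ptE a b c d e k) P := by
  have := hP !![p, q; r, s] (by simp [Matrix.det_fin_two, h])
  conv_rhs => rw [← this]
  unfold matSubst
  rw [aeval_def, ← coe_eval₂Hom, ← RingHom.comp_apply]
  congr 1
  apply ringHom_ext
  · intro x; simp
  · rintro ⟨i, j⟩
    fin_cases i <;> fin_cases j <;> simp [ptE]

lemma eval_diag {F : Type*} [Field F] [CharZero F] {P : MvPolynomial (Fin 3 × Fin 2) F}
    {k₁ k₂ k₃ m : ℕ} (hm : k₁ + k₂ + k₃ = m + m)
    (hh : IsTriHomogeneous P ![k₁, k₂, k₃])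
    (hP : ∀ g : Matrix (Fin 2) (Fin 2) F, g.det = 1 → matSubst F g P = P) (D : F) :
    eval (ptE 1 0 0 D 1 D) P = D ^ m * eval (ptE 1 0 0 1 1 1) P := by
  let H : Polynomial F := aeval (ptE 1 0 0 Polynomial.X 1 Polynomial.X) P
  have hH : ∀ t, Polynomial.eval t H = eval (ptE 1 0 0 t 1 t) P := by
    intro t
    have : (Polynomial.evalRingHom t).comp
        (aeval (R := F) (ptE 1 0 0 Polynomial.X 1 Polynomial.X)).toRingHom
          = eval (ptE 1 0 0 t 1 t) := by
      apply ringHom_ext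
      · intro x; simp
      · rintro ⟨i, j⟩
        fin_cases i <;> fin_cases j <;> simp [ptE]
    exact congrArg (fun φ => φ P) this
  have key : H = Polynomial.X ^ m * Polynomial.C (eval (ptE 1 0 0 1 1 1) P) := by
    apply Polynomial.eq_of_infinite_eval_eq
    refine Set.Infinite.mono (s := Set.range (fun n : ℕ => ((n:F)+1)^2)) ?_ ?_
    · rintro _ ⟨n, rfl⟩
      have ht : ((n:F)+1) ≠ 0 := by exact_mod_cast Nat.succ_ne_zero n
      change Polynomial.eval (((n:F)+1)^2) _ = Polynomial.eval (((n:F)+1)^2) _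
      rw [hH]
      generalize (n:F)+1 = t at ht ⊢
      simp only [Polynomial.eval_mul, Polynomial.eval_pow, Polynomial.eval_X, Polynomial.eval_C]
      have e1 := eval_inv hP t 0 0 t⁻¹ 1 0 0 (t^2) 1 (t^2) (by field_simp; simp)
      rw [← e1]
      have e2 := eval_scale hh t t t 1 0 0 1 1 1
      rw [← pow_mul, two_mul, ← hm, pow_add, pow_add, ← e2]
      congr 2
      congr 1 <;> field_simp <;> simp
    · apply Set.infinite_range_of_injective
      intro a b hab
      have : (a+1)^2 = (b+1)^2 := by
        have : ((a:F)+1)^2 = ((b:F)+1)^2 := hab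
        exact_mod_cast this
      have := Nat.pow_left_injective (two_ne_zero) this
      omega
  rw [← hH, key]
  simp only [Polynomial.eval_mul, Polynomial.eval_pow, Polynomial.eval_X, Polynomial.eval_C]

lemma eval_generic {F : Type*} [Field F] [CharZero F] {P : MvPolynomial (Fin 3 × Fin 2) F}
    {p q r : ℕ}
    (hh : IsTriHomogeneous P ![q + r, p + r, p + q])
    (hP : ∀ g : Matrix (Fin 2) (Fin 2) F, g.det = 1 → matSubst F g P = P) (a b c d e k : F)
    (h12 : a * d - b * c ≠ 0) (h13 : a * k - b * e ≠ 0) (h23 : c * k - d * e ≠ 0) :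
    eval (ptE a b c d e k) P = (-1)^p * eval (ptE 1 0 0 1 1 1) P *
      ((c * k - d * e)^p * (a * k - b * e)^q * (a * d - b * c)^r) := by
  obtain ⟨A, hA⟩ : ∃ A, A = -(c * k - d * e) / (a * d - b * c) := ⟨_, rfl⟩
  obtain ⟨B, hB⟩ : ∃ B, B = (a * k - b * e) / (a * d - b * c) := ⟨_, rfl⟩
  have hA0 : A ≠ 0 := by rw [hA]; exact div_ne_zero (neg_ne_zero.2 h23) h12
  have hB0 : B ≠ 0 := by rw [hB]; exact div_ne_zero h13 h12
  have hA' : c * k - d * e = - (A * (a * d - b * c)) := by rw [hA, div_mul_cancel₀ _ h12, neg_neg]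
  have hB' : a * k - b * e = B * (a * d - b * c) := by rw [hB, div_mul_cancel₀ _ h12]
  have he : e = A * a + B * c := by
    apply mul_right_cancel₀ h12
    linear_combination (-a) * hA' + c * hB'
  have hk : k = A * b + B * d := by
    apply mul_right_cancel₀ h12
    linear_combination (-b) * hA' + d * hB'
  rw [hA', hB']
  obtain ⟨D, hD⟩ : ∃ D, D = a * d - b * c := ⟨_, rfl⟩
  rw [← hD] at h12 ⊢
  have e1 := eval_scale hh A B 1 a b c d e k
  have e2 := eval_diag (m := p + q + r) (by ring) hh hP (A * B * D)
  have e3 := eval_inv hP (A * a) (A * b) (c / (A * D)) (d / (A * D)) 1 0 0 (A * B * D) 1 (A * B * D)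
    (by field_simp; rw [hD])
  have e4 : eval (ptE (A * a) (A * b) (B * c) (B * d) (1 * e) (1 * k)) P =
      (A * B * D) ^ (p + q + r) * eval (ptE 1 0 0 1 1 1) P := by
    rw [← e2, ← e3]
    congr 2
    rw [he, hk]
    congr 1 <;> field_simp <;> ring
  rw [e4] at e1
  have hne : A ^ (q + r) * B ^ (p + r) ≠ 0 := mul_ne_zero (pow_ne_zero _ hA0) (pow_ne_zero _ hB0)
  apply mul_left_cancel₀ hne
  have hs : ((-1 : F)^p) * (-1)^p = 1 := by rw [← mul_pow]; simp
  rw [one_pow, mul_one] at e1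
  rw [← e1, neg_pow (A * D)]
  linear_combination (-(A ^ (q + r) * B ^ (p + r) * eval (ptE 1 0 0 1 1 1) P *
    ((A * D)^p * (B * D)^q * D^r))) * hs

lemma isTri_of_weighted {F : Type*} [Field F] {P : MvPolynomial (Fin 3 × Fin 2) F}
    {k : Fin 3 → ℕ}
    (h : IsWeightedHomogeneous (fun v : Fin 3 × Fin 2 => (Pi.single v.1 1 : Fin 3 → ℕ)) P k) :
    IsTriHomogeneous P k := by
  intro m hm i
  have := h (mem_support_iff.1 hm)
  rw [← this, Finsupp.weight_apply, Finsupp.sum_fintype _ _ (by simp)]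
  simp only [Fintype.sum_prod_type, Fin.sum_univ_two, Fin.sum_univ_three]
  fin_cases i <;> simp

lemma delta_weighted {F : Type*} [Field F] (i j : Fin 3) :
    IsWeightedHomogeneous (fun v : Fin 3 × Fin 2 => (Pi.single v.1 1 : Fin 3 → ℕ))
      (deltaPoly F i j) (Pi.single i 1 + Pi.single j 1) := by
  unfold deltaPoly
  rw [sub_eq_add_neg]
  refine IsWeightedHomogeneous.add ?_ ?_
  · exact (isWeightedHomogeneous_X F _ (i, 0)).mul (isWeightedHomogeneous_X F _ (j, 1))
  · rw [← neg_one_smul F]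
    exact (weightedHomogeneousSubmodule F _ _).smul_mem _
      ((isWeightedHomogeneous_X F _ (i, 1)).mul (isWeightedHomogeneous_X F _ (j, 0)))

lemma delta_inv {F : Type*} [Field F] (i j : Fin 3) (g : Matrix (Fin 2) (Fin 2) F)
    (hg : g.det = 1) : matSubst F g (deltaPoly F i j) = deltaPoly F i j := by
  have h : (C (g 0 0) * C (g 1 1) - C (g 0 1) * C (g 1 0) : MvPolynomial (Fin 3 × Fin 2) F) = 1 := by
    rw [← C_mul, ← C_mul, ← C_sub, ← Matrix.det_fin_two, hg, C_1]
  simp only [matSubst, deltaPoly, map_sub, map_mul, aeval_X]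
  linear_combination (X (i, 0) * X (j, 1) - X (i, 1) * X (j, 0)) * h

lemma eval_delta {F : Type*} [Field F] (p q r : ℕ) (a b c d e k : F) :
    eval (ptE a b c d e k) (deltaPoly F 1 2 ^ p * deltaPoly F 0 2 ^ q * deltaPoly F 0 1 ^ r)
      = (c * k - d * e)^p * (a * k - b * e)^q * (a * d - b * c)^r := by
  simp [deltaPoly, ptE]

/-- For a field `F` of characteristic zero and a balanced triple `(k₁,k₂,k₃)` with even sum,
the subspace of `P_{(k₁,k₂,k₃)}` of polynomials invariant under the substitutions
`Wᵢ ↦ Wᵢ g` for all `g ∈ SL₂(F)` is one-dimensional, spanned by `Δ_{(k₁,k₂,k₃)}`: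
a polynomial lies in this subspace iff it is a scalar multiple of `Δ_{(k₁,k₂,k₃)}`,
and `Δ_{(k₁,k₂,k₃)} ≠ 0`. -/
theorem sl2_invariants_one_dimensional (F : Type*) [Field F] [CharZero F] (k₁ k₂ k₃ : ℕ)
    (heven : Even (k₁ + k₂ + k₃)) (h1 : k₁ ≤ k₂ + k₃) (h2 : k₂ ≤ k₁ + k₃)
    (h3 : k₃ ≤ k₁ + k₂) :
    DeltaPoly F k₁ k₂ k₃ ≠ 0 ∧
    ∀ P : MvPolynomial (Fin 3 × Fin 2) F,
      (IsTriHomogeneous P ![k₁, k₂, k₃] ∧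
        ∀ g : Matrix (Fin 2) (Fin 2) F, g.det = 1 → matSubst F g P = P) ↔
      ∃ c : F, P = c • DeltaPoly F k₁ k₂ k₃ := by
  obtain ⟨p, q, r, rfl, rfl, rfl⟩ :
      ∃ p q r : ℕ, k₁ = q + r ∧ k₂ = p + r ∧ k₃ = p + q := by
    obtain ⟨m, hm⟩ := heven
    exact ⟨m - k₁, m - k₂, m - k₃, by omega, by omega, by omega⟩
  have hD : DeltaPoly F (q + r) (p + r) (p + q) =
      deltaPoly F 1 2 ^ p * deltaPoly F 0 2 ^ q * deltaPoly F 0 1 ^ r := by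
    unfold DeltaPoly
    rw [show (p + r + (p + q) - (q + r)) / 2 = p by omega,
      show (q + r + (p + q) - (p + r)) / 2 = q by omega,
      show (q + r + (p + r) - (p + q)) / 2 = r by omega]
  rw [hD]
  refine ⟨?_, fun P => ⟨?_, ?_⟩⟩
  · intro h
    have := eval_delta p q r (1 : F) 0 0 1 1 1
    rw [h] at this
    simp at this
    exact pow_ne_zero p (neg_ne_zero.2 (one_ne_zero (α := F))) this.symm
  · rintro ⟨hh, hP⟩
    refine ⟨(-1)^p * eval (ptE 1 0 0 1 1 1) P, ?_⟩
    have hz : (P - ((-1)^p * eval (ptE 1 0 0 1 1 1) P) •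
        (deltaPoly F 1 2 ^ p * deltaPoly F 0 2 ^ q * deltaPoly F 0 1 ^ r)) *
        (deltaPoly F 1 2 ^ 1 * deltaPoly F 0 2 ^ 1 * deltaPoly F 0 1 ^ 1) = 0 := by
      apply MvPolynomial.funext
      intro x
      rw [ptE_eta x]
      generalize x (0,0) = a
      generalize x (0,1) = b
      generalize x (1,0) = c
      generalize x (1,1) = d
      generalize x (2,0) = e
      generalize x (2,1) = k
      rw [map_mul, map_sub, smul_eval, eval_delta, eval_delta, map_zero]
      by_cases h12 : a * d - b * c = 0
      · rw [h12]; simp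
      by_cases h13 : a * k - b * e = 0
      · rw [h13]; simp
      by_cases h23 : c * k - d * e = 0
      · rw [h23]; simp
      rw [eval_generic hh hP a b c d e k h12 h13 h23, sub_self, zero_mul]
    rcases mul_eq_zero.1 hz with h | h
    · exact sub_eq_zero.1 h
    · exfalso
      have := eval_delta 1 1 1 (1 : F) 0 0 1 1 1
      rw [h] at this
      simp at this
  · rintro ⟨c, rfl⟩
    constructor
    · apply isTri_of_weighted
      refine (weightedHomogeneousSubmodule F _ _).smul_mem _ ?_
      have := (((delta_weighted (F := F) 1 2).pow p).mul ((delta_weighted (F := F) 0 2).pow q)).mul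
        ((delta_weighted (F := F) 0 1).pow r)
      rw [mem_weightedHomogeneousSubmodule]
      convert this using 1
      funext i
      fin_cases i <;> simp
    · intro g hg
      simp only [map_smul, map_mul, map_pow, delta_inv _ _ g hg]
end

section
/- Let F be a field of characteristic zero and k ∈ ℕ. The bilinear form ⟨·,·⟩_k on the dual space V_k of P_k defined by ⟨l₁, l₂⟩_k := Σ_{i=0}^{k} (−1)^{k−i} · C(k,i) · l₁(X^i Y^{k−i}) · l₂(X^{k−i} Y^i) (i.e. the evaluation of l₁ ⊗ l₂ on the expansion of δ^k = (X₁Y₂ − Y₁X₂)^k, regarded as an element of P_k ⊗ P_k) is a perfect (nondegenerate) pairing on V_k. -/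
open MvPolynomial

/-- The monomial `X^i Y^(k-i)`, as an element of the space `P_k` of homogeneous polynomials of
degree `k` in two variables. -/
noncomputable def monBasisElt (F : Type*) [Field F] (k : ℕ) (i : Fin (k + 1)) :
    homogeneousSubmodule (Fin 2) F k :=
  ⟨X 0 ^ (i : ℕ) * X 1 ^ (k - (i : ℕ)), by
    rw [mem_homogeneousSubmodule]
    have h := (isHomogeneous_X_pow (R := F) (0 : Fin 2) (i : ℕ)).mul
      (isHomogeneous_X_pow (R := F) (1 : Fin 2) (k - (i : ℕ)))
    have hik : (i : ℕ) + (k - (i : ℕ)) = k := by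
      have := i.isLt
      omega
    rwa [hik] at h⟩

/-- The pairing `⟨l₁, l₂⟩ₖ = Σᵢ (-1)^(k-i) C(k,i) l₁(X^i Y^(k-i)) l₂(X^(k-i) Y^i)` on the dual
`V_k` of `P_k`, i.e. the evaluation of `l₁ ⊗ l₂` on the expansion of `δ^k = (X₁Y₂ - Y₁X₂)^k`
regarded as an element of `P_k ⊗ P_k`. -/
noncomputable def deltaPairing (F : Type*) [Field F] (k : ℕ)
    (l₁ l₂ : Module.Dual F (homogeneousSubmodule (Fin 2) F k)) : F :=
  ∑ i : Fin (k + 1),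
    (-1 : F) ^ (k - (i : ℕ)) * (k.choose (i : ℕ)) *
      (l₁ (monBasisElt F k i) * l₂ (monBasisElt F k ⟨k - (i : ℕ), by omega⟩))

/-- Coefficient functional. -/
noncomputable def coeffFun (F : Type*) [Field F] (k : ℕ) (j : ℕ) :
    Module.Dual F (homogeneousSubmodule (Fin 2) F k) :=
  (MvPolynomial.lcoeff F (Finsupp.single 0 j + Finsupp.single 1 (k - j))).comp
    (homogeneousSubmodule (Fin 2) F k).subtype

theorem coeffFun_mon (F : Type*) [Field F] (k : ℕ) (j : ℕ) (i : Fin (k + 1)) :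
    coeffFun F k j (monBasisElt F k i) = if (i : ℕ) = j then 1 else 0 := by
  have h : (X 0 ^ (i : ℕ) * X 1 ^ (k - (i : ℕ)) : MvPolynomial (Fin 2) F) =
      monomial (Finsupp.single 0 (i : ℕ) + Finsupp.single 1 (k - (i : ℕ))) 1 := by
    rw [X_pow_eq_monomial, X_pow_eq_monomial, monomial_mul, one_mul]
  change coeff _ (X 0 ^ (i : ℕ) * X 1 ^ (k - (i : ℕ)) : MvPolynomial (Fin 2) F) = _
  rw [h, coeff_monomial]
  congr 1
  apply propext
  constructor
  · intro h
    have := DFunLike.congr_fun h 0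
    simpa using this
  · intro h
    rw [h]

theorem dual_ext_mon (F : Type*) [Field F] (k : ℕ)
    (l : Module.Dual F (homogeneousSubmodule (Fin 2) F k))
    (h : ∀ i, l (monBasisElt F k i) = 0) : l = 0 := by
  ext p
  have hp : p = ∑ d : (p : MvPolynomial (Fin 2) F).support.attach,
      coeff d.1.1 (p : MvPolynomial (Fin 2) F) •
        monBasisElt F k ⟨min (d.1.1 0) k, by omega⟩ := by
    apply Subtype.ext
    rw [AddSubmonoidClass.coe_finsetSum]
    conv_lhs => rw [(p : MvPolynomial (Fin 2) F).as_sum, ← Finset.sum_attach,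
      ← Finset.sum_coe_sort]
    refine Finset.sum_congr rfl fun d _ => ?_
    have hd : d.1.1 0 + d.1.1 1 = k := by
      have := (mem_homogeneousSubmodule k _).1 p.2 (mem_support_iff.1 d.1.2)
      rw [Finsupp.weight_apply, Finsupp.sum_fintype _ _ (by simp)] at this
      simpa using this
    change _ = coeff d.1.1 (p : MvPolynomial (Fin 2) F) •
      (X 0 ^ (min (d.1.1 0) k) * X 1 ^ (k - (min (d.1.1 0) k)) : MvPolynomial (Fin 2) F)
    rw [min_eq_left (by omega), show k - d.1.1 0 = d.1.1 1 by omega, X_pow_eq_monomial,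
      X_pow_eq_monomial, monomial_mul, one_mul, smul_monomial, smul_eq_mul, mul_one]
    have he : Finsupp.single 0 (d.1.1 0) + Finsupp.single 1 (d.1.1 1) = d.1.1 := by
      ext a
      fin_cases a <;> simp
    rw [he]
  rw [hp, map_sum]
  simp [h]

theorem deltaPairing_nondegenerate (F : Type*) [Field F] [CharZero F] (k : ℕ) :
    (∀ l₁ : Module.Dual F (homogeneousSubmodule (Fin 2) F k),
        (∀ l₂, deltaPairing F k l₁ l₂ = 0) → l₁ = 0) ∧
    (∀ l₂ : Module.Dual F (homogeneousSubmodule (Fin 2) F k),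
        (∀ l₁, deltaPairing F k l₁ l₂ = 0) → l₂ = 0) := by
  have hc : ∀ i : Fin (k + 1), ((k.choose (i : ℕ) : ℕ) : F) ≠ 0 := fun i =>
    Nat.cast_ne_zero.2 (Nat.choose_pos (by omega)).ne'
  constructor
  · intro l hl
    refine dual_ext_mon F k l fun i => ?_
    have := hl (coeffFun F k (k - i))
    unfold deltaPairing at this
    rw [Finset.sum_eq_single i] at this
    · simpa [coeffFun_mon, hc i] using this
    · intro b _ hb
      have : k - (b : ℕ) ≠ k - i := by
        intro h; apply hb; ext; omega
      simp [coeffFun_mon, this]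
    · simp
  · intro l hl
    refine dual_ext_mon F k l fun i => ?_
    have := hl (coeffFun F k (k - i))
    unfold deltaPairing at this
    rw [Finset.sum_eq_single ⟨k - i, by omega⟩] at this
    · have e : (⟨k - (k - (i : ℕ)), by omega⟩ : Fin (k + 1)) = i := by ext; simp; omega
      have h2 := hc ⟨k - i, by omega⟩
      simp only [coeffFun_mon, e] at this
      simpa [h2] using this
    · intro b _ hb
      have : (b : ℕ) ≠ k - i := by
        intro h; apply hb; ext; exact h
      simp [coeffFun_mon, this]
    · simp
end
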